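/- Let m ≥ 2. For every j with 2 ≤ j ≤ m there exists a sign ε ∈ {1, −1} such that, in ⋀^{m−1}_K Ω_{K/ℂ}: ι_{V₁} ι_{V₂} ⋯ ι_{V_m} ( (z₀ A₂ ⋯ A_{j−1} · B_j B_{j+1} ⋯ B_{m−1} · A_m)^{−1} Ω ) = ε · dlog(z₀²/B_m) ∧ dlog(A₂/B_m) ∧ ⋯ ∧ dlog(A_{j−1}/B_m) ∧ dlog(B_j/B_m) ∧ ⋯ ∧ dlog(B_{m−1}/B_m). (This is Proposition 3.11 of the paper for the odd-dimensional quadric Q_{2m−1}; j = m is the Schubert case and j = 2 is the Rietsch case.) -/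

import Mathlib

/-!
Proposition 3.11 of the paper, for the odd-dimensional quadric `Q_{2m−1}`:
for every `2 ≤ j ≤ m` there is a sign `ε ∈ {1, −1}` such that
`ι_{V₁}⋯ι_{V_m} ((z₀A₂⋯A_{j−1}·B_j⋯B_{m−1}·A_m)⁻¹ Ω)
 = ε · dlog(z₀²/B_m) ∧ dlog(A₂/B_m) ∧ ⋯ ∧ dlog(A_{j−1}/B_m)
     ∧ dlog(B_j/B_m) ∧ ⋯ ∧ dlog(B_{m−1}/B_m)`.
-/

set_option synthInstance.maxHeartbeats 1000000
set_option maxHeartbeats 1000000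

noncomputable section

open MvPolynomial

/-- The coordinate ring `R = ℂ[z₀, z₁, …, z_{2m−2}]` of the affine chart
`{x_{2m} ≠ 0}` of the odd quadric `Q_{2m−1}`. -/
abbrev QodR (m : ℕ) := MvPolynomial (Fin (2 * m - 1)) ℂ

/-- The fraction field `K = Frac(R)`. -/
abbrev QodK (m : ℕ) := FractionRing (QodR m)

/-- The coordinate `z_j` for `0 ≤ j ≤ 2m−2`. -/
def qodZ (m j : ℕ) : QodR m :=
  if h : j < 2 * m - 1 then X ⟨j, h⟩ else 0

/-- `A_j = z_{2j−1} z_{2j}` for `1 ≤ j ≤ m−1`, and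
`A_m = −(z₀² + z₁z₂ + ⋯ + z_{2m−3}z_{2m−2})` (the quadric relation solved for
`z_{2m−1}`, with the convention `z_{2m} = 1`). -/
def qodA (m j : ℕ) : QodR m :=
  if j = m then
    -(qodZ m 0 ^ 2 + ∑ i ∈ Finset.Icc 1 (m - 1), qodZ m (2 * i - 1) * qodZ m (2 * i))
  else qodZ m (2 * j - 1) * qodZ m (2 * j)

/-- `B_j = ∑_{i=j}^m A_i` for `2 ≤ j ≤ m` (so `B_m = A_m`). -/
def qodB (m j : ℕ) : QodR m := ∑ i ∈ Finset.Icc j m, qodA m i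

/-- The ℂ-derivations `V_j = z_{2j−1}∂/∂z_{2j−1} − z_{2j}∂/∂z_{2j}` for
`1 ≤ j ≤ m−1`, and `V_m = ∑_{i=0}^{2m−2} z_i ∂/∂z_i` (the Euler derivation). -/
def qodV (m i : ℕ) : Derivation ℂ (QodR m) (QodR m) :=
  if i = m then
    MvPolynomial.mkDerivation ℂ (fun s => qodZ m s.1)
  else
    MvPolynomial.mkDerivation ℂ (fun s =>
      if s.1 = 2 * i - 1 then qodZ m s.1
      else if s.1 = 2 * i then -(qodZ m s.1) else 0)

/-- Contraction (interior product) of `⋀_A Ω_{A/ℂ}` by the `A`-linear functional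
`Ω_{A/ℂ} → A` determined by `dg ↦ V g`, for a ℂ-derivation `V` of `A`. -/
def contrDer {A : Type} [CommRing A] [Algebra ℂ A] (V : Derivation ℂ A A) :
    ExteriorAlgebra A (Ω[A⁄ℂ]) →ₗ[A] ExteriorAlgebra A (Ω[A⁄ℂ]) :=
  CliffordAlgebra.contractLeft ((KaehlerDifferential.linearMapEquivDerivation ℂ A).symm V)

/-- `dlog f = f⁻¹ df ∈ Ω_{K/ℂ}`. -/
def dlog (m : ℕ) (f : QodK m) : Ω[QodK m⁄ℂ] :=
  f⁻¹ • KaehlerDifferential.D ℂ (QodK m) f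

/-- The image of `z_j` in `K`. -/
def qodZK (m j : ℕ) : QodK m := algebraMap (QodR m) (QodK m) (qodZ m j)

/-- The image of `A_j` in `K`. -/
def qodAK (m j : ℕ) : QodK m := algebraMap (QodR m) (QodK m) (qodA m j)

/-- The image of `B_j` in `K`. -/
def qodBK (m j : ℕ) : QodK m := algebraMap (QodR m) (QodK m) (qodB m j)

/-- `Ω = dz₀∧dz₁∧⋯∧dz_{2m−2}`, viewed in `⋀_K Ω_{K/ℂ}`. -/
def qodOmegaK (m : ℕ) : ExteriorAlgebra (QodK m) (Ω[QodK m⁄ℂ]) :=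
  (((List.range (2 * m - 1)).map (fun j =>
    ExteriorAlgebra.ι (QodK m) (KaehlerDifferential.D ℂ (QodK m) (qodZK m j)))).prod)

namespace QodAux

def PM {X : Type*} [Neg X] (x y : X) : Prop := x = y ∨ x = -y

section pm
variable {X : Type*} [AddCommGroup X]
theorem PM.rfl' {x : X} : PM x x := Or.inl rfl
theorem PM.symm {x y : X} (h : PM x y) : PM y x := by
  rcases h with h | h
  · exact Or.inl h.symm
  · right; rw [h, neg_neg]
theorem PM.trans {x y w : X} (h : PM x y) (h' : PM y w) : PM x w := by
  rcases h with h | h <;> rcases h' with h' | h' <;> subst h <;> subst h'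
  · left; rfl
  · right; rfl
  · right; rfl
  · left; rw [neg_neg]
theorem PM.neg {x y : X} (h : PM x y) : PM (-x) y := by
  rcases h with h | h
  · right; rw [h]
  · left; rw [h, neg_neg]
theorem PM.map {Y F : Type*} [AddCommGroup Y] [FunLike F X Y] [AddMonoidHomClass F X Y]
    (f : F) {x y : X} (h : PM x y) : PM (f x) (f y) := by
  rcases h with h | h
  · left; rw [h]
  · right; rw [h, map_neg]
theorem PM.smul {R : Type*} [Ring R] [Module R X] (c : R) {x y : X} (h : PM x y) :
    PM (c • x) (c • y) := by
  rcases h with h | h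
  · left; rw [h]
  · right; rw [h, smul_neg]
end pm

theorem PM.mul_left {X : Type*} [Ring X] (c : X) {x y : X} (h : PM x y) :
    PM (c * x) (c * y) := by
  rcases h with h | h
  · left; rw [h]
  · right; rw [h, mul_neg]
theorem PM.mul_right {X : Type*} [Ring X] (c : X) {x y : X} (h : PM x y) :
    PM (x * c) (y * c) := by
  rcases h with h | h
  · left; rw [h]
  · right; rw [h, neg_mul]

section ext
variable {K M : Type*} [CommRing K] [AddCommGroup M] [Module K M]

local notation "e" => ExteriorAlgebra.ι K (M := M)

abbrev ctr (d : Module.Dual K M) : ExteriorAlgebra K M →ₗ[K] ExteriorAlgebra K M :=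
  CliffordAlgebra.contractLeft d

theorem ctr_mul (d : Module.Dual K M) (v : M) (x : ExteriorAlgebra K M) :
    ctr d (e v * x) = d v • x - e v * ctr d x :=
  CliffordAlgebra.contractLeft_ι_mul (Q := (0 : QuadraticForm K M)) d v x

theorem ctr_one (d : Module.Dual K M) : ctr d (1 : ExteriorAlgebra K M) = 0 :=
  CliffordAlgebra.contractLeft_one ..

theorem anti (v w : M) (x : ExteriorAlgebra K M) : e v * (e w * x) = -(e w * (e v * x)) := by
  have := ExteriorAlgebra.ι_add_mul_swap (R := K) v w
  rw [← mul_assoc, ← mul_assoc, eq_neg_of_add_eq_zero_left this, neg_mul]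

theorem sq0 (v : M) (x : ExteriorAlgebra K M) : e v * (e v * x) = 0 := by
  rw [← mul_assoc, ExteriorAlgebra.ι_sq_zero, zero_mul]

theorem mul_comm_pm (l : List M) (w : M) (x : ExteriorAlgebra K M) :
    PM ((l.map e).prod * (e w * x)) (e w * ((l.map e).prod * x)) := by
  induction l with
  | nil => left; simp
  | cons a l ih =>
    simp only [List.map_cons, List.prod_cons, mul_assoc]
    refine (ih.mul_left _).trans ?_
    right; rw [anti]

theorem mem_zero (l : List M) (w : M) (h : w ∈ l) (x : ExteriorAlgebra K M) :
    e w * ((l.map e).prod * x) = 0 := by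
  induction l with
  | nil => simp at h
  | cons a l ih =>
    simp only [List.map_cons, List.prod_cons, mul_assoc]
    rcases List.mem_cons.1 h with rfl | h
    · exact sq0 _ _
    · rw [anti, ih h, mul_zero, neg_zero]

theorem mem_zero' (l : List M) (w : M) (h : w ∈ l) :
    (l.map e).prod * e w = 0 := by
  have h1 := mul_comm_pm l w (1 : ExteriorAlgebra K M)
  rw [mem_zero l w h, mul_one] at h1
  rcases h1 with h1 | h1 <;> simp [h1]

theorem ctr_prod (d : Module.Dual K M) (l : List M) (h : ∀ v ∈ l, d v = 0)
    (x : ExteriorAlgebra K M) :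
    PM (ctr d ((l.map e).prod * x)) ((l.map e).prod * ctr d x) := by
  induction l with
  | nil => left; simp
  | cons a l ih =>
    simp only [List.map_cons, List.prod_cons, mul_assoc]
    rw [ctr_mul, h a (by simp), zero_smul, zero_sub]
    exact ((ih fun v hv => h v (by simp [hv])).mul_left _).neg

theorem ctr_prod0 (d : Module.Dual K M) (l : List M) (h : ∀ v ∈ l, d v = 0) :
    ctr d ((l.map e).prod) = 0 := by
  have h1 := ctr_prod d l h 1
  rw [ctr_one, mul_one, mul_zero] at h1
  rcases h1 with h1 | h1 <;> simp [h1]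

theorem ctr_last (d : Module.Dual K M) (l : List M) (h : ∀ v ∈ l, d v = 0) (w : M) :
    PM (ctr d ((l.map e).prod * e w)) (d w • (l.map e).prod) := by
  refine (ctr_prod d l h _).trans ?_
  have : ctr d (e w) = algebraMap K _ (d w) := CliffordAlgebra.contractLeft_ι ..
  rw [this, Algebra.smul_def, Algebra.commutes]
  exact PM.rfl'

theorem ctr_comm_pm (d : ℕ → Module.Dual K M) (d' : Module.Dual K M) (l : List ℕ)
    (x : ExteriorAlgebra K M) :
    PM (l.foldr (fun i ω => ctr (d i) ω) (ctr d' x))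
      (ctr d' (l.foldr (fun i ω => ctr (d i) ω) x)) := by
  induction l with
  | nil => exact PM.rfl'
  | cons a l ih =>
    simp only [List.foldr_cons]
    refine (ih.map (ctr (d a))).trans ?_
    right
    exact CliffordAlgebra.contractLeft_comm ..

theorem fold_smul (d : ℕ → Module.Dual K M) (l : List ℕ) (c : K) (x : ExteriorAlgebra K M) :
    l.foldr (fun i ω => ctr (d i) ω) (c • x) = c • l.foldr (fun i ω => ctr (d i) ω) x := by
  induction l with
  | nil => rfl
  | cons a l ih => simp only [List.foldr_cons, ih, map_smul]

/-- first factor killed by everything -/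
theorem fold_first (d : ℕ → Module.Dual K M) (l : List ℕ) (v : M) (h : ∀ i ∈ l, d i v = 0)
    (x : ExteriorAlgebra K M) :
    PM (l.foldr (fun i ω => ctr (d i) ω) (e v * x))
      (e v * l.foldr (fun i ω => ctr (d i) ω) x) := by
  induction l with
  | nil => exact PM.rfl'
  | cons a l ih =>
    simp only [List.foldr_cons]
    refine ((ih fun i hi => h i (by simp [hi])).map (ctr (d a))).trans ?_
    rw [ctr_mul, h a (by simp), zero_smul, zero_sub]
    exact PM.rfl'.neg

theorem fold_pair (d : ℕ → Module.Dual K M) (l : List ℕ) (v w : M) (h : ∀ i ∈ l, d i v = 0)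
    (h' : ∀ i ∈ l, d i w = 0) (x : ExteriorAlgebra K M) :
    (l.foldr (fun i ω => ctr (d i) ω) (e v * (e w * x))) =
      (e v * (e w * l.foldr (fun i ω => ctr (d i) ω) x)) := by
  induction l with
  | nil => rfl
  | cons a l ih =>
    simp only [List.foldr_cons]
    rw [ih (fun i hi => h i (by simp [hi])) (fun i hi => h' i (by simp [hi])),
      ctr_mul, ctr_mul, h a (by simp), h' a (by simp)]
    simp

theorem fold_main (d : ℕ → Module.Dual K M) (l : List ℕ) (hl : l.Nodup) (v w q : ℕ → M)
    (hv : ∀ i ∈ l, ∀ k ∈ l, i ≠ k → d i (v k) = 0)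
    (hw : ∀ i ∈ l, ∀ k ∈ l, i ≠ k → d i (w k) = 0)
    (hq : ∀ i ∈ l, d i (v i) • w i - d i (w i) • v i = q i)
    (hq0 : ∀ i ∈ l, ∀ k ∈ l, i ≠ k → d i (q k) = 0) :
    l.foldr (fun i ω => ctr (d i) ω) ((l.map fun i => e (v i) * e (w i)).prod) =
      ((l.map q).map e).prod := by
  induction l with
  | nil => rfl
  | cons a l ih =>
    have hal : a ∉ l := (List.nodup_cons.1 hl).1
    have hne : ∀ i ∈ l, i ≠ a := fun i hi h => hal (h ▸ hi)
    simp only [List.foldr_cons, List.map_cons, List.prod_cons, mul_assoc]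
    rw [fold_pair d l _ _ (fun i hi => hv i (by simp [hi]) a (by simp) (hne i hi))
      (fun i hi => hw i (by simp [hi]) a (by simp) (hne i hi)),
      ih (List.nodup_cons.1 hl).2
        (fun i hi k hk => hv i (by simp [hi]) k (by simp [hk]))
        (fun i hi k hk => hw i (by simp [hi]) k (by simp [hk]))
        (fun i hi => hq i (by simp [hi]))
        (fun i hi k hk => hq0 i (by simp [hi]) k (by simp [hk])),
      ctr_mul, ctr_mul, ctr_prod0, ← hq a (by simp)]
    · simp [sub_mul]
    · intro u hu
      obtain ⟨k, hk, rfl⟩ := List.mem_map.1 hu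
      exact hq0 a (by simp) k (by simp [hk]) (hne k hk).symm

theorem telescope (u w : ℕ → M) (m : ℕ) (hm : u m = w m)
    (h : ∀ k, k < m → u k = w k + u (k+1)) (j : ℕ) (hj : j ≤ m) :
    (((List.Ico j m).map u).map e).prod * e (u m) =
      (((List.Ico j m).map w).map e).prod * e (w m) := by
  induction hj using Nat.decreasingInduction with
  | self => simp [hm]
  | of_succ k hk ih =>
    rw [List.Ico.eq_cons hk]
    simp only [List.map_cons, List.prod_cons, mul_assoc]
    rw [← ih, h k hk, map_add, add_mul]
    convert add_zero _
    rcases Nat.lt_or_ge (k+1) m with h' | h'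
    · exact mem_zero _ _ (List.mem_map.2 ⟨k+1, by simp [h'], rfl⟩) _
    · obtain rfl : m = k+1 := by omega
      simp

theorem omega_split (f : ℕ → ExteriorAlgebra K M) (n : ℕ) :
    ((List.range (2*n+1)).map f).prod =
      f 0 * ((List.Ico 1 (n+1)).map fun i => f (2*i-1) * f (2*i)).prod := by
  induction n with
  | zero => simp
  | succ n ih =>
    rw [show 2*(n+1)+1 = (2*n+1)+1+1 by ring, List.range_succ, List.range_succ,
      List.Ico.succ_top (by omega : 1 ≤ n+1)]
    simp only [List.map_append, List.prod_append, ih, List.map_cons, List.map_nil,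
      List.prod_cons, List.prod_nil, mul_one, mul_assoc]
    rw [show 2*(n+1)-1 = 2*n+1 by omega, show 2*(n+1) = 2*n+1+1 by ring]

theorem prod_last_sum (l : List M) (s : Finset ℕ) (u : ℕ → M) (h : ∀ i ∈ s, u i ∈ l) :
    (l.map e).prod * e (∑ i ∈ s, u i) = 0 := by
  rw [map_sum, Finset.mul_sum]
  exact Finset.sum_eq_zero fun i hi => mem_zero' _ _ (h i hi)

end ext

section fld
variable {K : Type} [Field K] [Algebra ℂ K]

local notation "e" => ExteriorAlgebra.ι K (M := Ω[K⁄ℂ])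
local notation "δ" => KaehlerDifferential.D ℂ K

theorem D_dlog (y b : K) (hy : y ≠ 0) (hb : b ≠ 0) :
    δ y = y • ((y/b)⁻¹ • δ (y/b)) + (y/b) • δ b := by
  have h : δ (y/b * b) = _ := Derivation.leibniz ..
  rw [div_mul_cancel₀ y hb] at h
  rw [h, smul_smul, add_comm]
  congr 2
  field_simp

theorem list_dlog (b : K) (hb : b ≠ 0) (L : List K) (hL : ∀ y ∈ L, y ≠ 0) :
    ((L.map δ).map e).prod * e (δ b) =
      L.prod • (((L.map fun y => (y/b)⁻¹ • δ (y/b)).map e).prod * e (δ b)) := by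
  induction L with
  | nil => simp
  | cons y L ih =>
    simp only [List.map_cons, List.prod_cons, mul_assoc]
    rw [ih fun y hy => hL y (by simp [hy])]
    rw [D_dlog y b (hL y (by simp)) hb, map_add, add_mul]
    have h0 : e (δ b) * (((L.map fun y => (y/b)⁻¹ • δ (y/b)).map e).prod * e (δ b)) = 0 := by
      have := mul_comm_pm (K := K) (L.map fun y => (y/b)⁻¹ • δ (y/b)) (δ b) (e (δ b))
      rw [ExteriorAlgebra.ι_sq_zero, mul_zero] at this
      rcases this.symm with h | h
      · exact h
      · rw [h, neg_zero]
    rw [map_smul e (y/b), smul_mul_assoc, mul_smul_comm, mul_smul_comm, h0, smul_zero, smul_zero,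
      add_zero, map_smul e y, smul_mul_assoc, smul_smul, mul_comm]

/-- functional of a derivation -/
def fn (V : Derivation ℂ K K) : Module.Dual K (Ω[K⁄ℂ]) :=
  (KaehlerDifferential.linearMapEquivDerivation ℂ K).symm V

theorem fn_D (V : Derivation ℂ K K) (x : K) : fn V (δ x) = V x :=
  Derivation.liftKaehlerDifferential_comp_D V x

theorem fn_dlog (V : Derivation ℂ K K) (y b : K) (hy : V y = 2 * y) (hb0 : b ≠ 0)
    (hy0 : y ≠ 0) (hb : V b = 2 * b) :
    fn V ((y/b)⁻¹ • δ (y/b)) = 0 := by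
  have h := congrArg (fn V) (D_dlog y b hy0 hb0)
  rw [map_add, map_smul (fn V) y, map_smul (fn V) (y/b), fn_D, fn_D, hy, hb, smul_eq_mul,
    smul_eq_mul] at h
  have h2 : y / b * (2 * b) = 2 * y := by field_simp
  rw [h2] at h
  have h3 : y * fn V ((y/b)⁻¹ • δ (y/b)) = 0 := by linear_combination -h
  exact (mul_eq_zero.1 h3).resolve_left hy0

theorem core (m : ℕ) (hm : 2 ≤ m) (j : ℕ) (hj : 2 ≤ j ∧ j ≤ m) (z A B : ℕ → K)
    (W : ℕ → Derivation ℂ K K)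
    (hA : ∀ k, 1 ≤ k → k < m → A k = z (2*k-1) * z (2*k))
    (hAm : A m = -(z 0 ^ 2 + ∑ i ∈ Finset.Icc 1 (m-1), A i))
    (hB : ∀ k, k < m → B k = A k + B (k+1)) (hBm : B m = A m)
    (hz0 : z 0 ≠ 0) (hA0 : ∀ k, 2 ≤ k → k < m → A k ≠ 0)
    (hB0 : ∀ k, 2 ≤ k → k ≤ m → B k ≠ 0)
    (hE : ∀ k, k < 2*m-1 → W m (z k) = z k)
    (hW1 : ∀ i, 1 ≤ i → i < m → W i (z (2*i-1)) = z (2*i-1))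
    (hW2 : ∀ i, 1 ≤ i → i < m → W i (z (2*i)) = -z (2*i))
    (hW0 : ∀ i, 1 ≤ i → i < m → ∀ k, k < 2*m-1 → k ≠ 2*i-1 → k ≠ 2*i → W i (z k) = 0) :
    PM ((List.Ico 1 (m + 1)).foldr (fun i ω => contrDer (W i) ω)
          (((z 0 * (∏ k ∈ Finset.Ico 2 j, A k) *
              (∏ k ∈ Finset.Ico j m, B k) * A m)⁻¹) •
            ((List.range (2 * m - 1)).map (fun j => e (δ (z j)))).prod))
        (e ((z 0 ^ 2 / B m)⁻¹ • δ (z 0 ^ 2 / B m)) *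
          (((List.Ico 2 j).map (fun k => e ((A k / B m)⁻¹ • δ (A k / B m)))).prod) *
          (((List.Ico j m).map (fun k => e ((B k / B m)⁻¹ • δ (B k / B m)))).prod)) := by
  have h2 : (2:K) ≠ 0 := by
    have := (map_ne_zero (algebraMap ℂ K)).2 (two_ne_zero (α := ℂ))
    rwa [map_ofNat] at this
  have hb := hB0 m hm le_rfl
  -- Euler facts
  have hEA' : ∀ k, 1 ≤ k → k < m → W m (A k) = 2 * A k := by
    intro k hk hk'
    rw [hA k hk hk', Derivation.leibniz, hE _ (by omega), hE _ (by omega), smul_eq_mul,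
      smul_eq_mul]
    ring
  have hE0 : W m (z 0 ^ 2) = 2 * z 0 ^ 2 := by
    rw [sq, Derivation.leibniz, hE _ (by omega), smul_eq_mul]; ring
  have hEAm : W m (A m) = 2 * A m := by
    have hs : ∑ i ∈ Finset.Icc 1 (m-1), W m (A i) = ∑ i ∈ Finset.Icc 1 (m-1), 2 * A i :=
      Finset.sum_congr rfl fun i hi => by
        rw [Finset.mem_Icc] at hi; exact hEA' i hi.1 (by omega)
    rw [hAm, map_neg, map_add, map_sum, hE0, hs, ← Finset.mul_sum]
    ring
  have hEB : ∀ k, 1 ≤ k → k ≤ m → W m (B k) = 2 * B k := by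
    intro k hk hk'
    induction hk' using Nat.decreasingInduction with
    | self => rw [hBm, hEAm]
    | of_succ k hk' ih =>
      rw [hB k hk', map_add, hEA' k hk hk', ih (by omega)]; ring
  -- the list
  set L : List K := z 0 ^ 2 :: ((List.Ico 2 j).map A ++ (List.Ico j m).map B) with hLdef
  have hL : ∀ y ∈ L, y ≠ 0 ∧ W m y = 2 * y := by
    intro y hy
    simp only [hLdef, List.mem_cons, List.mem_append, List.mem_map, List.Ico.mem] at hy
    rcases hy with rfl | ⟨k, hk, rfl⟩ | ⟨k, hk, rfl⟩
    · exact ⟨pow_ne_zero _ hz0, hE0⟩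
    · exact ⟨hA0 k hk.1 (by omega), hEA' k (by omega) (by omega)⟩
    · exact ⟨hB0 k (by omega) (by omega), hEB k (by omega) (by omega)⟩
  have hprod : L.prod = z 0 ^ 2 * ((∏ k ∈ Finset.Ico 2 j, A k) * ∏ k ∈ Finset.Ico j m, B k) := by
    rw [hLdef, List.prod_cons, List.prod_append]; rfl
  set R := ((L.map fun y => (y/B m)⁻¹ • δ (y/B m)).map e).prod with hR
  have hRHS : (e ((z 0 ^ 2 / B m)⁻¹ • δ (z 0 ^ 2 / B m)) *
          (((List.Ico 2 j).map (fun k => e ((A k / B m)⁻¹ • δ (A k / B m)))).prod) *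
          (((List.Ico j m).map (fun k => e ((B k / B m)⁻¹ • δ (B k / B m)))).prod)) = R := by
    rw [hR, hLdef]
    simp only [List.map_cons, List.map_append, List.prod_cons, List.prod_append, List.map_map,
      mul_assoc]
    rfl
  rw [hRHS]
  set N := z 0 * (∏ k ∈ Finset.Ico 2 j, A k) * (∏ k ∈ Finset.Ico j m, B k) * A m with hN
  have hNL : z 0 * N = L.prod * B m := by rw [hN, hprod, hBm]; ring
  have hN0 : N ≠ 0 := by
    intro h
    rw [h, mul_zero] at hNL
    have : L.prod ≠ 0 := by
      intro h0
      rw [List.prod_eq_zero_iff] at h0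
      exact (hL 0 h0).1 rfl
    exact mul_ne_zero this hb hNL.symm
  -- contraction with the Euler field
  set Q := (((List.Ico 1 m).map fun k => δ (A k)).map e).prod with hQ
  have hfold : PM ((List.Ico 1 (m + 1)).foldr (fun i ω => contrDer (W i) ω)
      ((List.range (2 * m - 1)).map (fun j => e (δ (z j)))).prod)
      (ctr (fn (W m)) (e (δ (z 0)) * Q)) := by
    rw [List.Ico.succ_top (by omega), List.foldr_append]
    refine (ctr_comm_pm (fun i => fn (W i)) (fn (W m)) (List.Ico 1 m) _).trans (PM.map _ ?_)
    obtain ⟨n, rfl⟩ : ∃ n, m = n + 1 := ⟨m - 1, by omega⟩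
    rw [show 2 * (n+1) - 1 = 2 * n + 1 by omega, omega_split]
    refine (fold_first (fun i => fn (W i)) _ _ ?_ _).trans (PM.mul_left _ (Or.inl ?_))
    · intro i hi
      rw [List.Ico.mem] at hi
      change fn (W i) _ = 0
      rw [fn_D]
      exact hW0 i hi.1 hi.2 0 (by omega) (by omega) (by omega)
    · refine fold_main (fun i => fn (W i)) _ (List.Ico.nodup ..) (fun i => δ (z (2*i-1)))
        (fun i => δ (z (2*i))) _ ?_ ?_ ?_ ?_
      all_goals simp only [List.Ico.mem, fn_D]
      · intro i hi k hk hik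
        exact hW0 i hi.1 hi.2 _ (by omega) (by omega) (by omega)
      · intro i hi k hk hik
        exact hW0 i hi.1 hi.2 _ (by omega) (by omega) (by omega)
      · intro i hi
        rw [hW1 i hi.1 hi.2, hW2 i hi.1 hi.2, hA i hi.1 hi.2, Derivation.leibniz, neg_smul,
          sub_neg_eq_add]
      · intro i hi k hk hik
        rw [hA k hk.1 hk.2, Derivation.leibniz,
          hW0 i hi.1 hi.2 _ (by omega) (by omega) (by omega),
          hW0 i hi.1 hi.2 _ (by omega) (by omega) (by omega), smul_zero, smul_zero, add_zero]
  -- change of variables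
  have hchange : PM (((L.map δ).map e).prod * e (δ (B m))) (e (δ (z 0 ^ 2)) * Q) := by
    have e1 : ((L.map δ).map e).prod * e (δ (B m)) =
        e (δ (z 0 ^ 2)) * ((((List.Ico 2 j).map fun k => δ (A k)).map e).prod *
          ((((List.Ico j m).map fun k => δ (B k)).map e).prod * e (δ (B m)))) := by
      rw [hLdef]
      simp only [List.map_cons, List.map_append, List.prod_cons, List.prod_append, List.map_map,
        mul_assoc]
      rfl
    rw [e1, telescope (K := K) (fun k => δ (B k)) (fun k => δ (A k)) m (by simp only [hBm])
      (fun k hk => by simp only [hB k hk, map_add]) j hj.2]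
    rw [← mul_assoc (List.prod _), ← List.prod_append, ← List.map_append, ← List.map_append,
      List.Ico.append_consecutive hj.1 hj.2]
    have e2 : δ (A m) = -(δ (A 1)) + -(δ (z 0 ^ 2) + ∑ i ∈ Finset.Icc 2 (m-1), δ (A i)) := by
      rw [hAm, ← Finset.sum_erase_add (Finset.Icc 1 (m-1)) A (a := 1) (by simp; omega)]
      have : (Finset.Icc 1 (m-1)).erase 1 = Finset.Icc 2 (m-1) := by
        ext x; simp; omega
      rw [this]
      simp only [map_neg, map_add, map_sum]
      abel
    set P := (((List.Ico 2 m).map fun k => δ (A k)).map e).prod with hP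
    have e3 : P * e (∑ i ∈ Finset.Icc 2 (m-1), δ (A i)) = 0 :=
      prod_last_sum _ _ _ fun i hi => by
        rw [Finset.mem_Icc] at hi
        exact List.mem_map.2 ⟨i, by rw [List.Ico.mem]; omega, rfl⟩
    have e4 : e (δ (z 0 ^ 2)) * (P * e (δ (z 0 ^ 2))) = 0 := by
      have h := mul_comm_pm ((List.Ico 2 m).map fun k => δ (A k)) (δ (z 0 ^ 2))
        (1 : ExteriorAlgebra K (Ω[K⁄ℂ]))
      rw [mul_one, mul_one] at h
      rcases h with h | h
      · rw [hP, h, sq0]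
      · rw [hP, h, mul_neg, sq0, neg_zero]
    have e5 : e (δ (z 0 ^ 2)) * (P * e (δ (A m))) = -(e (δ (z 0 ^ 2)) * (P * e (δ (A 1)))) := by
      rw [e2]
      simp only [map_add, map_neg, mul_add, mul_neg, neg_add, e4, e3]
      simp
    rw [e5]
    refine PM.neg (PM.mul_left _ ?_)
    have := mul_comm_pm ((List.Ico 2 m).map fun k => δ (A k)) (δ (A 1))
        (1 : ExteriorAlgebra K (Ω[K⁄ℂ]))
    rw [mul_one, mul_one] at this
    rw [hQ, List.Ico.eq_cons (by omega : 1 < m)]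
    exact this
  have hfin : PM (ctr (fn (W m)) (e (δ (z 0 ^ 2)) * Q)) ((L.prod * (2 * B m)) • R) := by
    refine (hchange.symm.map (ctr (fn (W m)))).trans ?_
    rw [list_dlog (B m) hb L fun y hy => (hL y hy).1, map_smul, mul_smul]
    refine PM.smul _ ?_
    have := ctr_last (fn (W m)) (L.map fun y => (y/B m)⁻¹ • δ (y/B m)) (by
      intro v hv
      obtain ⟨y, hy, rfl⟩ := List.mem_map.1 hv
      exact fn_dlog _ _ _ (hL y hy).2 hb (hL y hy).1 (hEB m (by omega) le_rfl)) (δ (B m))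
    rwa [fn_D, hEB m (by omega) le_rfl] at this
  have hsq : e (δ (z 0 ^ 2)) * Q = (2 * z 0) • (e (δ (z 0)) * Q) := by
    rw [sq, Derivation.leibniz, ← two_smul K, smul_smul, map_smul, smul_mul_assoc]
  rw [hsq, map_smul] at hfin
  have hfs := fold_smul (fun i => fn (W i)) (List.Ico 1 (m+1)) N⁻¹
    ((List.range (2 * m - 1)).map (fun j => e (δ (z j)))).prod
  have hfin2 := PM.smul (2 * z 0)⁻¹ hfin
  rw [inv_smul_smul₀ (mul_ne_zero h2 hz0), smul_smul] at hfin2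
  have key := PM.smul N⁻¹ (hfold.trans hfin2)
  have hone : N⁻¹ * ((2 * z 0)⁻¹ * (L.prod * (2 * B m))) = 1 := by
    rw [show L.prod * (2 * B m) = 2 * (L.prod * B m) by ring, ← hNL]
    field_simp
  rw [smul_smul, hone, one_smul] at key
  refine PM.trans (Or.inl ?_) key
  exact hfs

end fld
end QodAux

namespace QodAux

theorem Z_ne (m k : ℕ) (hk : k < 2*m-1) : qodZ m k ≠ 0 := by
  rw [qodZ, dif_pos hk]; exact X_ne_zero _

theorem V_Z_E (m k : ℕ) : qodV m m (qodZ m k) = qodZ m k := by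
  rw [qodV, if_pos rfl]
  by_cases hk : k < 2*m-1
  · conv_lhs => rw [qodZ, dif_pos hk, mkDerivation_X]
  · simp [qodZ, dif_neg hk]

theorem V_Z (m i k : ℕ) (hi : i ≠ m) (hk : k < 2*m-1) : qodV m i (qodZ m k) =
    if k = 2 * i - 1 then qodZ m k else if k = 2 * i then -(qodZ m k) else 0 := by
  rw [qodV, if_neg hi]
  conv_lhs => rw [qodZ, dif_pos hk, mkDerivation_X]

def ev (m : ℕ) : QodR m →ₐ[ℂ] ℂ := aeval fun s => if s.1 = 0 then 1 else 0

theorem ev_Z (m k : ℕ) (hk : k < 2*m-1) : ev m (qodZ m k) = if k = 0 then 1 else 0 := by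
  rw [qodZ, dif_pos hk, ev, aeval_X]

theorem ev_A (m k : ℕ) (hk : 1 ≤ k) (hk' : k < m) : ev m (qodA m k) = 0 := by
  rw [qodA, if_neg (by omega), map_mul, ev_Z _ _ (by omega), if_neg (by omega), zero_mul]

theorem ev_Am (m : ℕ) (hm : 2 ≤ m) : ev m (qodA m m) = -1 := by
  rw [qodA, if_pos rfl, map_neg, map_add, map_sum, Finset.sum_eq_zero, map_pow,
    ev_Z _ _ (by omega), if_pos rfl]
  · simp
  · intro i hi
    rw [Finset.mem_Icc] at hi
    rw [map_mul, ev_Z _ _ (by omega), if_neg (by omega), zero_mul]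

theorem ev_B (m k : ℕ) (hm : 2 ≤ m) (hk : 1 ≤ k) (hk' : k ≤ m) : ev m (qodB m k) = -1 := by
  rw [qodB, map_sum, Finset.sum_eq_single m, ev_Am m hm]
  · intro b hb hb'
    rw [Finset.mem_Icc] at hb
    exact ev_A m b (by omega) (by omega)
  · intro h
    simp at h; omega

theorem alg_ne (m : ℕ) (x : QodR m) (hx : x ≠ 0) : algebraMap (QodR m) (QodK m) x ≠ 0 :=
  (map_ne_zero_iff _ (IsFractionRing.injective (QodR m) (QodK m))).2 hx

end QodAux

/-- Proposition 3.11: for every `2 ≤ j ≤ m` there exists a sign `ε ∈ {1, −1}`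
with `ι_{V₁}⋯ι_{V_m} ((z₀A₂⋯A_{j−1}·B_j⋯B_{m−1}·A_m)⁻¹ Ω)
 = ε · dlog(z₀²/B_m) ∧ dlog(A₂/B_m) ∧ ⋯ ∧ dlog(A_{j−1}/B_m)
     ∧ dlog(B_j/B_m) ∧ ⋯ ∧ dlog(B_{m−1}/B_m)`,
where the `ι_{V_i}` are the (unique) extensions of the derivations `V_i` to `K`. -/
theorem qod_contraction (m : ℕ) (hm : 2 ≤ m) (j : ℕ) (hj : 2 ≤ j ∧ j ≤ m)
    (W : ℕ → Derivation ℂ (QodK m) (QodK m))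
    (hW : ∀ i, ∀ g : QodR m,
      W i (algebraMap (QodR m) (QodK m) g) = algebraMap (QodR m) (QodK m) (qodV m i g)) :
    ∃ ε : QodK m, (ε = 1 ∨ ε = -1) ∧
      (List.Ico 1 (m + 1)).foldr (fun i ω => contrDer (W i) ω)
          (((qodZK m 0 * (∏ k ∈ Finset.Ico 2 j, qodAK m k) *
              (∏ k ∈ Finset.Ico j m, qodBK m k) * qodAK m m)⁻¹) • qodOmegaK m) =
        ε • (ExteriorAlgebra.ι (QodK m) (dlog m (qodZK m 0 ^ 2 / qodBK m m)) *
          (((List.Ico 2 j).map (fun k =>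
            ExteriorAlgebra.ι (QodK m) (dlog m (qodAK m k / qodBK m m)))).prod) *
          (((List.Ico j m).map (fun k =>
            ExteriorAlgebra.ι (QodK m) (dlog m (qodBK m k / qodBK m m)))).prod)) := by
  have h := QodAux.core m hm j hj (qodZK m) (qodAK m) (qodBK m) W
    (fun k hk hk' => by
      rw [qodAK, qodA, if_neg (by omega), map_mul]; rfl)
    (by
      have hs : ∑ i ∈ Finset.Icc 1 (m-1), qodAK m i = algebraMap (QodR m) (QodK m)
          (∑ i ∈ Finset.Icc 1 (m - 1), qodZ m (2 * i - 1) * qodZ m (2 * i)) := by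
        rw [map_sum]
        refine Finset.sum_congr rfl fun i hi => ?_
        rw [Finset.mem_Icc] at hi
        rw [qodAK, qodA, if_neg (by omega)]
      rw [hs, qodAK, qodA, if_pos rfl, map_neg, map_add, map_pow]; rfl)
    (fun k hk => by
      have : qodB m k = qodA m k + qodB m (k+1) := by
        rw [qodB, qodB, ← Finset.add_sum_Ioc_eq_sum_Icc hk.le]; congr 2; ext x; simp only [Finset.mem_Ioc, Finset.mem_Icc]; omega
      rw [qodBK, this, map_add]; rfl)
    (by rw [qodBK, qodB, Finset.Icc_self, Finset.sum_singleton]; rfl)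
    (QodAux.alg_ne m _ (QodAux.Z_ne m 0 (by omega)))
    (fun k hk hk' => QodAux.alg_ne m _ (by
      rw [qodA, if_neg (by omega)]
      exact mul_ne_zero (QodAux.Z_ne m _ (by omega)) (QodAux.Z_ne m _ (by omega))))
    (fun k hk hk' => QodAux.alg_ne m _ (by
      intro h0
      have := QodAux.ev_B m k hm (by omega) hk'
      rw [h0, map_zero] at this
      norm_num at this))
    (fun k _ => by rw [qodZK, hW, QodAux.V_Z_E])
    (fun i hi hi' => by
      rw [qodZK, hW, QodAux.V_Z _ _ _ (by omega) (by omega), if_pos rfl])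
    (fun i hi hi' => by
      rw [qodZK, hW, QodAux.V_Z _ _ _ (by omega) (by omega), if_neg (by omega), if_pos rfl,
        map_neg])
    (fun i hi hi' k hk h1 h2 => by
      rw [qodZK, hW, QodAux.V_Z _ _ _ (by omega) hk, if_neg h1, if_neg h2, map_zero])
  rcases h with h | h
  · exact ⟨1, Or.inl rfl, by rw [one_smul]; exact h⟩
  · exact ⟨-1, Or.inr rfl, by rw [neg_one_smul]; exact h⟩


end
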